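/- arXiv:math/0607686 — 2 statements merged into one kernel-verified Lean document; each statement's English description precedes it below -/
import Mathlib

section
/- Let (g_m)_{m≥1} be a sequence of probability densities on [0,1], and for each M let h_M = g_1 ∗ g_2 ∗ ··· ∗ g_M denote their circular convolution (the density of the sum Y_1 + ··· + Y_M modulo 1 of independent random variables Y_m with densities g_m). Then h_M converges in L¹([0,1]) to the constant function 1 (the uniform density) as M → ∞ if and only if for every integer n ≠ 0 one has lim_{M→∞} ĝ_1(n)·ĝ_2(n)···ĝ_M(n) = 0. -/
open MeasureTheory Filter

noncomputable section

/-- A probability density on `[0,1]`: nonnegative, integrable, total integral one. -/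
def IsProbDensity (g : ℝ → ℝ) : Prop :=
  (∀ x, 0 ≤ g x) ∧ IntegrableOn g (Set.Icc 0 1) ∧ (∫ x in (0:ℝ)..1, g x) = 1

/-- Circular convolution on `[0,1]` (the argument is taken modulo 1). -/
def circConv (f g : ℝ → ℝ) : ℝ → ℝ :=
  fun x => ∫ y in (0:ℝ)..1, f y * g (Int.fract (x - y))

/-- The `n`-th Fourier coefficient of `g ∈ L¹([0,1])`. -/
def fourierCoeff01 (g : ℝ → ℝ) (n : ℤ) : ℂ :=
  ∫ x in (0:ℝ)..1, (g x : ℂ) * Complex.exp (-(2 * Real.pi * Complex.I) * n * x)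

section Circle

open AddCircle Finset
open scoped Convolution

variable {T : ℝ}

theorem norm_fourier_apply (n : ℤ) (x : AddCircle T) : ‖fourier n x‖ = 1 :=
  Circle.norm_coe _

theorem fourier_sub_apply (n : ℤ) (x y : AddCircle T) :
    fourier n (x - y) = fourier n x * fourier (-n) y := by
  rw [fourier_apply, fourier_apply, fourier_apply, smul_sub, sub_eq_add_neg, toCircle_add,
    neg_smul, Circle.coe_mul]

/-- The `N`-th Fejér kernel on the circle. -/
def fejerKernel (N : ℕ) (x : AddCircle T) : ℂ :=
  (N : ℂ)⁻¹ * ∑ j ∈ range N, ∑ k ∈ range N, fourier ((j : ℤ) - k) x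

theorem continuous_fejerKernel (N : ℕ) : Continuous (fejerKernel (T := T) N) := by
  unfold fejerKernel; fun_prop

theorem norm_fejerKernel (N : ℕ) (x : AddCircle T) :
    (‖fejerKernel N x‖ : ℂ) = fejerKernel N x := by
  have h : fejerKernel N x =
      (((N : ℝ)⁻¹ * Complex.normSq (∑ j ∈ range N, fourier (j : ℤ) x) : ℝ) : ℂ) := by
    push_cast
    rw [fejerKernel, ← Complex.mul_conj, map_sum, sum_mul_sum]
    simp only [← fourier_neg, ← fourier_add, sub_eq_add_neg]
  rw [h, Complex.norm_real, Real.norm_of_nonneg]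
  exact mul_nonneg (by positivity) (Complex.normSq_nonneg _)

variable [hT : Fact (0 < T)]

theorem continuous_integrable_haarAddCircle {E : Type*} [NormedAddCommGroup E]
    {f : AddCircle T → E} (hf : Continuous f) : Integrable f haarAddCircle :=
  hf.integrable_of_hasCompactSupport (HasCompactSupport.of_compactSpace f)

theorem integral_fourier (n : ℤ) :
    ∫ x : AddCircle T, fourier n x ∂haarAddCircle = if n = 0 then 1 else 0 := by
  split_ifs with h
  · simp [h]
  · exact integral_eq_zero_of_add_right_eq_neg (μ := haarAddCircle)
      (fourier_add_half_inv_index h hT.elim)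

theorem norm_fourierCoeff_le (f : AddCircle T → ℂ) (n : ℤ) :
    ‖fourierCoeff f n‖ ≤ ∫ x, ‖f x‖ ∂haarAddCircle := by
  refine (norm_integral_le_integral_norm _).trans_eq ?_
  simp only [norm_smul, norm_fourier_apply, one_mul]

theorem integral_norm_convolution_le {f g : AddCircle T → ℂ}
    (hf : Integrable f haarAddCircle) (hg : Integrable g haarAddCircle) :
    ∫ x, ‖(f ⋆[ContinuousLinearMap.mul ℂ ℂ, haarAddCircle] g) x‖ ∂haarAddCircle ≤
      (∫ x, ‖f x‖ ∂haarAddCircle) * ∫ x, ‖g x‖ ∂haarAddCircle := by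
  have h := integral_convolution (ContinuousLinearMap.mul ℝ ℝ) hf.norm hg.norm
  rw [ContinuousLinearMap.mul_apply'] at h
  rw [← h]
  refine integral_mono (hf.integrable_convolution _ hg).norm
    (hf.norm.integrable_convolution _ hg.norm) fun x => ?_
  refine (norm_integral_le_integral_norm _).trans_eq ?_
  simp [convolution_def]

theorem fourierCoeff_convolution {f g : AddCircle T → ℂ}
    (hf : Integrable f haarAddCircle) (hg : Integrable g haarAddCircle) (n : ℤ) :
    fourierCoeff (f ⋆[ContinuousLinearMap.mul ℂ ℂ, haarAddCircle] g) n =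
      fourierCoeff f n * fourierCoeff g n := by
  have h := integral_convolution (ContinuousLinearMap.mul ℂ ℂ) (hf.fourier_smul (-n))
    (hg.fourier_smul (-n))
  rw [ContinuousLinearMap.mul_apply'] at h
  rw [fourierCoeff, fourierCoeff, fourierCoeff, ← h]
  refine integral_congr_ae (.of_forall fun x => ?_)
  simp only [convolution_mul, smul_eq_mul]
  rw [← integral_const_mul]
  refine integral_congr_ae (.of_forall fun t => ?_)
  simp only [fourier_sub_apply, neg_neg]
  have : fourier (-n) t * fourier n t = 1 := by rw [← fourier_add]; simp
  linear_combination (-(fourier (-n) x * f t * g (x - t))) * this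

theorem fourier_convolution (n : ℤ) (f : AddCircle T → ℂ) (x : AddCircle T) :
    ((fourier n : AddCircle T → ℂ) ⋆[ContinuousLinearMap.mul ℂ ℂ, haarAddCircle] f) x =
      fourierCoeff f n * fourier n x := by
  simp only [convolution_mul_swap, fourierCoeff, fourier_sub_apply, smul_eq_mul]
  rw [mul_comm, ← integral_const_mul]
  simp only [mul_assoc]

/-- The `N`-th Cesàro mean of the Fourier series of `f`. -/
def fejerSum (N : ℕ) (f : AddCircle T → ℂ) (x : AddCircle T) : ℂ :=
  (N : ℂ)⁻¹ * ∑ j ∈ range N, ∑ k ∈ range N,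
    fourierCoeff f ((j : ℤ) - k) * fourier ((j : ℤ) - k) x

theorem continuous_fejerSum (N : ℕ) (f : AddCircle T → ℂ) : Continuous (fejerSum N f) := by
  unfold fejerSum; fun_prop

theorem integral_norm_fejerKernel_le_one (N : ℕ) :
    ∫ x : AddCircle T, ‖fejerKernel N x‖ ∂haarAddCircle ≤ 1 := by
  have h : ((∫ x : AddCircle T, ‖fejerKernel N x‖ ∂haarAddCircle : ℝ) : ℂ) =
      (((N : ℝ)⁻¹ * N : ℝ) : ℂ) := by
    rw [← integral_complex_ofReal]
    simp only [norm_fejerKernel]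
    unfold fejerKernel
    rw [integral_const_mul, integral_finsetSum _ fun j _ =>
      continuous_integrable_haarAddCircle (by fun_prop)]
    push_cast
    congr 1
    calc _ = ∑ j ∈ range N, (1 : ℂ) := by
          refine sum_congr rfl fun j hj => ?_
          rw [integral_finsetSum _ fun k _ => continuous_integrable_haarAddCircle (by fun_prop)]
          simp only [integral_fourier, sub_eq_zero, Nat.cast_inj]
          rw [sum_ite_eq, if_pos hj]
      _ = N := by simp
  rw [Complex.ofReal_inj.mp h]
  exact inv_mul_le_one

theorem fejerSum_eq_convolution (N : ℕ) {f : AddCircle T → ℂ} (hf : Integrable f haarAddCircle) :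
    fejerSum N f = fejerKernel N ⋆[ContinuousLinearMap.mul ℂ ℂ, haarAddCircle] f := by
  ext x
  have hi (n : ℤ) : Integrable (fun t => fourier n (x - t) * f t) haarAddCircle := by
    simp only [fourier_sub_apply, mul_assoc]
    exact (hf.fourier_smul (-n)).const_mul _
  simp only [convolution_mul_swap, fejerKernel, mul_assoc, sum_mul]
  rw [integral_const_mul, integral_finsetSum _ fun j _ => integrable_finsetSum _ fun k _ => hi _,
    fejerSum]
  congr 1
  refine sum_congr rfl fun j _ => ?_
  rw [integral_finsetSum _ fun k _ => hi _]
  refine sum_congr rfl fun k _ => ?_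
  rw [← fourier_convolution, convolution_mul_swap]

theorem integral_norm_fejerSum_le (N : ℕ) {f : AddCircle T → ℂ}
    (hf : Integrable f haarAddCircle) :
    ∫ x, ‖fejerSum N f x‖ ∂haarAddCircle ≤ ∫ x, ‖f x‖ ∂haarAddCircle := by
  rw [fejerSum_eq_convolution N hf]
  refine (integral_norm_convolution_le
    (continuous_integrable_haarAddCircle (continuous_fejerKernel N)) hf).trans ?_
  exact mul_le_of_le_one_left (integral_nonneg fun _ => norm_nonneg _)
    (integral_norm_fejerKernel_le_one N)

theorem fejerSum_add (N : ℕ) {f g : AddCircle T → ℂ} (hf : Integrable f haarAddCircle)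
    (hg : Integrable g haarAddCircle) : fejerSum N (f + g) = fejerSum N f + fejerSum N g := by
  ext x
  simp only [fejerSum, fourierCoeff.add hf hg, Pi.add_apply, add_mul, sum_add_distrib, mul_add]

theorem fejerSum_smul (N : ℕ) (c : ℂ) (f : AddCircle T → ℂ) :
    fejerSum N (c • f) = c • fejerSum N f := by
  ext x
  simp only [fejerSum, fourierCoeff.const_smul, Pi.smul_apply, smul_eq_mul, mul_sum]
  exact sum_congr rfl fun j _ => sum_congr rfl fun k _ => by ring

theorem fejerSum_congr_ae (N : ℕ) {f g : AddCircle T → ℂ} (h : f =ᵐ[haarAddCircle] g) :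
    fejerSum N f = fejerSum N g := by
  unfold fejerSum
  rw [fourierCoeff_congr_ae h]

theorem card_sub_card_offset_le (N : ℕ) (n : ℤ) :
    #((range N).filter fun j : ℕ => ¬ ∃ k ∈ range N, (j : ℤ) - k = n) ≤ n.natAbs := by
  rcases le_total 0 n with hn | hn
  · refine (card_le_card (t := range n.natAbs) fun j hj => ?_).trans_eq (card_range _)
    simp only [mem_filter, mem_range, not_exists, not_and] at hj ⊢
    by_contra! hlt
    exact hj.2 (j - n.natAbs) (by omega) (by omega)
  · refine (card_le_card (t := Ico (N - n.natAbs) N) fun j hj => ?_).trans ?_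
    · simp only [mem_filter, mem_range, not_exists, not_and, mem_Ico] at hj ⊢
      refine ⟨?_, hj.1⟩
      by_contra! hlt
      exact hj.2 (j + n.natAbs) (by omega) (by omega)
    · rw [Nat.card_Ico]; omega

theorem fejerSum_fourier (N : ℕ) (n : ℤ) (x : AddCircle T) :
    fejerSum N (fourier n) x =
      (N : ℂ)⁻¹ * #((range N).filter fun j : ℕ => ∃ k ∈ range N, (j : ℤ) - k = n) * fourier n x := by
  rw [fejerSum, mul_assoc]
  congr 1
  rw [card_filter, Nat.cast_sum, sum_mul]
  refine sum_congr rfl fun j _ => ?_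
  simp only [fourierCoeff_fourier]
  split_ifs with h
  · obtain ⟨k, hk, hkn⟩ := h
    rw [sum_eq_single_of_mem k hk fun l _ hl => ?_]
    · rw [hkn, Pi.single_eq_same, Nat.cast_one]
    · rw [Pi.single_eq_of_ne (by omega), zero_mul]
  · rw [Nat.cast_zero, zero_mul]
    refine sum_eq_zero fun k hk => ?_
    rw [Pi.single_eq_of_ne fun e => h ⟨k, hk, e⟩, zero_mul]

theorem norm_fejerSum_fourier_sub_le {N : ℕ} (hN : N ≠ 0) (n : ℤ) (x : AddCircle T) :
    ‖fejerSum N (fourier n) x - fourier n x‖ ≤ n.natAbs / N := by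
  have hc := card_filter_add_card_filter_not (s := range N)
    (fun j : ℕ => ∃ k ∈ range N, (j : ℤ) - k = n)
  rw [card_range] at hc
  have hle := card_sub_card_offset_le N n
  rw [fejerSum_fourier]
  generalize #((range N).filter fun j : ℕ => ∃ k ∈ range N, (j : ℤ) - k = n) = a at *
  generalize #((range N).filter fun j : ℕ => ¬ ∃ k ∈ range N, (j : ℤ) - k = n) = b at *
  have hN' : (N : ℂ) ≠ 0 := Nat.cast_ne_zero.mpr hN
  have : (N : ℂ)⁻¹ * a * fourier n x - fourier n x = -((b : ℂ) / N * fourier n x) := by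
    have : (a : ℂ) = N - b := by rw [← hc]; push_cast; ring
    rw [this]; field_simp; ring
  rw [this, norm_neg, norm_mul, norm_fourier_apply, mul_one, norm_div, Complex.norm_natCast,
    Complex.norm_natCast]
  gcongr

theorem integrable_norm_fejerSum_sub (N : ℕ) {u : AddCircle T → ℂ}
    (hu : Integrable u haarAddCircle) :
    Integrable (fun x => ‖fejerSum N u x - u x‖) haarAddCircle :=
  ((continuous_integrable_haarAddCircle (continuous_fejerSum N u)).sub hu).norm

theorem integral_norm_fejerSum_sub_add_le (N : ℕ) {u v : AddCircle T → ℂ}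
    (hu : Integrable u haarAddCircle) (hv : Integrable v haarAddCircle) :
    ∫ x, ‖fejerSum N (u + v) x - (u + v) x‖ ∂haarAddCircle ≤
      (∫ x, ‖fejerSum N u x - u x‖ ∂haarAddCircle) +
        ∫ x, ‖fejerSum N v x - v x‖ ∂haarAddCircle := by
  have hint {w : AddCircle T → ℂ} := integrable_norm_fejerSum_sub N (u := w)
  rw [← integral_add (hint hu) (hint hv)]
  refine integral_mono (hint (hu.add hv)) ((hint hu).add (hint hv)) fun x => ?_
  simp only [fejerSum_add N hu hv, Pi.add_apply]
  rw [add_sub_add_comm]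
  exact norm_add_le _ _

theorem integral_norm_fejerSum_sub_congr_ae {u v : AddCircle T → ℂ}
    (h : u =ᵐ[haarAddCircle] v) (N : ℕ) :
    ∫ x, ‖fejerSum N u x - u x‖ ∂haarAddCircle =
      ∫ x, ‖fejerSum N v x - v x‖ ∂haarAddCircle := by
  rw [fejerSum_congr_ae N h]
  refine integral_congr_ae ?_
  filter_upwards [h] with x hx
  rw [hx]

theorem tendsto_integral_norm_fejerSum_sub_of_mem_span {u : Lp ℂ 1 (haarAddCircle (T := T))}
    (hu : u ∈ Submodule.span ℂ (Set.range (fourierLp (T := T) 1))) :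
    Tendsto (fun N => ∫ x, ‖fejerSum N u x - u x‖ ∂haarAddCircle) atTop (nhds 0) := by
  induction hu using Submodule.span_induction with
  | mem u hu =>
    obtain ⟨n, rfl⟩ := hu
    simp only [integral_norm_fejerSum_sub_congr_ae (coeFn_fourierLp 1 n)]
    refine squeeze_zero' (.of_forall fun N => integral_nonneg fun _ => norm_nonneg _) ?_
      (tendsto_const_div_atTop_nhds_zero_nat (n.natAbs : ℝ))
    filter_upwards [eventually_ne_atTop 0] with N hN
    refine (integral_mono (integrable_norm_fejerSum_sub N
      (continuous_integrable_haarAddCircle (fourier n).continuous))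
      (integrable_const _) (norm_fejerSum_fourier_sub_le hN n)).trans_eq ?_
    simp
  | zero =>
    simp only [integral_norm_fejerSum_sub_congr_ae (Lp.coeFn_zero ℂ 1 haarAddCircle)]
    simp [fejerSum, fourierCoeff]
  | add u v _ _ hu hv =>
    simp only [integral_norm_fejerSum_sub_congr_ae (Lp.coeFn_add u v)]
    refine squeeze_zero (fun N => integral_nonneg fun _ => norm_nonneg _)
      (fun N => integral_norm_fejerSum_sub_add_le N (L1.integrable_coeFn u)
        (L1.integrable_coeFn v)) ?_
    simpa using hu.add hv
  | smul c u _ hu =>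
    simp only [integral_norm_fejerSum_sub_congr_ae (Lp.coeFn_smul c u), fejerSum_smul,
      Pi.smul_apply, ← smul_sub, norm_smul, integral_const_mul]
    simpa using hu.const_mul ‖c‖

/-- Fejér's theorem in `L¹` of the circle. -/
theorem tendsto_integral_norm_fejerSum_sub {f : AddCircle T → ℂ}
    (hf : Integrable f haarAddCircle) :
    Tendsto (fun N => ∫ x, ‖fejerSum N f x - f x‖ ∂haarAddCircle) atTop (nhds 0) := by
  rw [Metric.tendsto_atTop]
  intro ε hε
  have hmem : hf.toL1 f ∈ closure
      (Submodule.span ℂ (Set.range (fourierLp (T := T) 1)) : Set (Lp ℂ 1 haarAddCircle)) := by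
    rw [← Submodule.topologicalClosure_coe, span_fourierLp_closure_eq_top ENNReal.one_ne_top]
    trivial
  obtain ⟨u, hu, hdist⟩ := Metric.mem_closure_iff.mp hmem (ε / 3) (by positivity)
  obtain ⟨N₀, hN₀⟩ := Metric.tendsto_atTop.mp (tendsto_integral_norm_fejerSum_sub_of_mem_span hu) (ε / 3) (by positivity)
  refine ⟨N₀, fun N hN => ?_⟩
  have hu' : Integrable u haarAddCircle := L1.integrable_coeFn u
  have hfu : Integrable (f - ⇑u) haarAddCircle := hf.sub hu'
  have hnorm : ∫ x, ‖(f - ⇑u) x‖ ∂haarAddCircle < ε / 3 := by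
    rw [dist_eq_norm, L1.norm_eq_integral_norm] at hdist
    convert hdist using 1
    refine integral_congr_ae ?_
    filter_upwards [Lp.coeFn_sub (hf.toL1 f) u, hf.coeFn_toL1] with x h₁ h₂
    rw [h₁, Pi.sub_apply, Pi.sub_apply, h₂]
  have hdiff : ∫ x, ‖fejerSum N (f - ⇑u) x - (f - ⇑u) x‖ ∂haarAddCircle ≤
      2 * ∫ x, ‖(f - ⇑u) x‖ ∂haarAddCircle := by
    have hF := (continuous_integrable_haarAddCircle (continuous_fejerSum N (f - ⇑u))).norm
    calc _ ≤ ∫ x, (‖fejerSum N (f - ⇑u) x‖ + ‖(f - ⇑u) x‖) ∂haarAddCircle :=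
          integral_mono (integrable_norm_fejerSum_sub N hfu) (hF.add hfu.norm) fun x => norm_sub_le _ _
      _ ≤ _ := by
          rw [integral_add hF hfu.norm, two_mul]
          exact add_le_add (integral_norm_fejerSum_le N hfu) le_rfl
  have hsum := integral_norm_fejerSum_sub_add_le N hfu hu'
  rw [sub_add_cancel] at hsum
  have hN' := hN₀ N hN
  rw [Real.dist_0_eq_abs, abs_of_nonneg (integral_nonneg fun _ => norm_nonneg _)] at hN' ⊢
  linarith

theorem fejerSum_convolution (N : ℕ) {f g : AddCircle T → ℂ} (hf : Integrable f haarAddCircle)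
    (hg : Integrable g haarAddCircle) :
    fejerSum N (f ⋆[ContinuousLinearMap.mul ℂ ℂ, haarAddCircle] g) =
      fejerSum N f ⋆[ContinuousLinearMap.mul ℂ ℂ, haarAddCircle] g := by
  ext x
  have hi (n : ℤ) (c : ℂ) : Integrable (fun t => c * (fourier n (x - t) * g t)) haarAddCircle := by
    simp only [fourier_sub_apply, mul_assoc]
    exact ((hg.fourier_smul (-n)).const_mul _).const_mul _
  simp only [convolution_mul_swap, fejerSum, mul_assoc, sum_mul]
  rw [integral_const_mul, integral_finsetSum _ fun j _ => integrable_finsetSum _ fun k _ => hi _ _]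
  congr 1
  refine sum_congr rfl fun j _ => ?_
  rw [integral_finsetSum _ fun k _ => hi _ _]
  refine sum_congr rfl fun k _ => ?_
  rw [fourierCoeff_convolution hf hg, integral_const_mul, mul_assoc, ← fourier_convolution,
    convolution_mul_swap]

theorem integral_norm_fejerSum_sub_convolution_le (N : ℕ) {f g : AddCircle T → ℂ}
    (hf : Integrable f haarAddCircle) (hg : Integrable g haarAddCircle)
    (hnorm : ∫ x, ‖g x‖ ∂haarAddCircle ≤ 1) :
    ∫ x, ‖fejerSum N (f ⋆[ContinuousLinearMap.mul ℂ ℂ, haarAddCircle] g) x -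
        (f ⋆[ContinuousLinearMap.mul ℂ ℂ, haarAddCircle] g) x‖ ∂haarAddCircle ≤
      ∫ x, ‖fejerSum N f x - f x‖ ∂haarAddCircle := by
  have hF := continuous_integrable_haarAddCircle (continuous_fejerSum N f)
  refine le_trans (le_of_eq ?_) ((integral_norm_convolution_le (hF.sub hf) hg).trans
    (mul_le_of_le_one_right (integral_nonneg fun _ => norm_nonneg _) hnorm))
  refine integral_congr_ae ?_
  filter_upwards [hF.ae_convolution_exists (ContinuousLinearMap.mul ℂ ℂ) hg,
    hf.ae_convolution_exists (ContinuousLinearMap.mul ℂ ℂ) hg] with x h₁ h₂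
  rw [fejerSum_convolution N hf hg, convolution_def, convolution_def, convolution_def,
    ← integral_sub h₁ h₂]
  simp

theorem integral_norm_fejerSum_sub_one_le {N : ℕ} (hN : N ≠ 0) {f : AddCircle T → ℂ}
    (hmean : fourierCoeff f 0 = 1) :
    ∫ x, ‖fejerSum N f x - 1‖ ∂haarAddCircle ≤
      (N : ℝ)⁻¹ * ∑ j ∈ range N, ∑ k ∈ (range N).erase j, ‖fourierCoeff f ((j : ℤ) - k)‖ := by
  have hN' : (N : ℂ) ≠ 0 := Nat.cast_ne_zero.mpr hN
  refine (integral_mono (g := fun _ => (N : ℝ)⁻¹ * ∑ j ∈ range N, ∑ k ∈ (range N).erase j,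
    ‖fourierCoeff f ((j : ℤ) - k)‖) ((continuous_integrable_haarAddCircle
      (continuous_fejerSum N f)).sub (integrable_const 1)).norm
    (integrable_const _) fun x => ?_).trans_eq (by simp)
  have h : fejerSum N f x - 1 = (N : ℂ)⁻¹ * ∑ j ∈ range N, ∑ k ∈ (range N).erase j,
      fourierCoeff f ((j : ℤ) - k) * fourier ((j : ℤ) - k) x := by
    have h1 : (1 : ℂ) = (N : ℂ)⁻¹ * ∑ j ∈ range N, (1 : ℂ) := by simp [hN']
    rw [fejerSum, h1, ← mul_sub, ← sum_sub_distrib]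
    congr 1
    refine sum_congr rfl fun j hj => ?_
    rw [← add_sum_erase _ _ hj, sub_self, hmean, fourier_zero, mul_one, add_sub_cancel_left]
  change ‖fejerSum N f x - 1‖ ≤ _
  rw [h, norm_mul, norm_inv, Complex.norm_natCast]
  refine mul_le_mul_of_nonneg_left ?_ (by positivity)
  refine (norm_sum_le _ _).trans (sum_le_sum fun j _ => (norm_sum_le _ _).trans_eq ?_)
  simp only [norm_mul, norm_fourier_apply, mul_one]

/-- A sequence of convolutions on the circle of functions of norm at most one and mean one
converges to `1` in `L¹` iff its nonzero Fourier coefficients tend to zero. -/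
theorem tendsto_integral_norm_convolution_sub_one_iff {G H : ℕ → AddCircle T → ℂ}
    (hG : ∀ m, 1 ≤ m → Integrable (G m) haarAddCircle)
    (hnorm : ∀ m, 1 ≤ m → ∫ x, ‖G m x‖ ∂haarAddCircle ≤ 1)
    (hmean : ∀ m, 1 ≤ m → fourierCoeff (G m) 0 = 1) (h1 : H 1 = G 1)
    (hrec : ∀ M, 1 ≤ M →
      H (M + 1) = H M ⋆[ContinuousLinearMap.mul ℂ ℂ, haarAddCircle] G (M + 1)) :
    Tendsto (fun M => ∫ x, ‖H M x - 1‖ ∂haarAddCircle) atTop (nhds 0) ↔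
      ∀ n : ℤ, n ≠ 0 →
        Tendsto (fun M => ∏ m ∈ Icc 1 M, fourierCoeff (G m) n) atTop (nhds 0) := by
  have hH : ∀ M, 1 ≤ M → Integrable (H M) haarAddCircle := by
    intro M hM
    induction M, hM using Nat.le_induction with
    | base => exact h1 ▸ hG 1 le_rfl
    | succ M hM ih => exact hrec M hM ▸ ih.integrable_convolution _ (hG _ (by omega))
  have hcoeff : ∀ n M, 1 ≤ M → fourierCoeff (H M) n = ∏ m ∈ Icc 1 M, fourierCoeff (G m) n := by
    intro n M hM
    induction M, hM using Nat.le_induction with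
    | base => simp [h1]
    | succ M hM ih =>
      rw [hrec M hM, fourierCoeff_convolution (hH M hM) (hG _ (by omega)), ih,
        prod_Icc_succ_top (by omega)]
  constructor
  · intro h n hn
    refine squeeze_zero_norm' ?_ h
    filter_upwards [eventually_ge_atTop 1] with M hM
    have h0 : fourierCoeff (T := T) (fun _ => (1 : ℂ)) n = 0 := by
      simp only [fourierCoeff, smul_eq_mul, mul_one, integral_fourier, neg_eq_zero, if_neg hn]
    have hsub : fourierCoeff (fun x => H M x - 1) n = fourierCoeff (H M) n := by
      have := congrFun (fourierCoeff.add (f := fun x => H M x - 1) (g := fun _ => 1)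
        ((hH M hM).sub (integrable_const 1)) (integrable_const 1)) n
      rw [Pi.add_apply, h0, add_zero] at this
      rw [← this]
      congr 1
      ext x
      simp
    rw [← hcoeff n M hM, ← hsub]
    exact norm_fourierCoeff_le _ n
  · intro h
    have hfejer (N : ℕ) : ∀ M, 1 ≤ M → ∫ x, ‖fejerSum N (H M) x - H M x‖ ∂haarAddCircle ≤
        ∫ x, ‖fejerSum N (G 1) x - G 1 x‖ ∂haarAddCircle := by
      intro M hM
      induction M, hM using Nat.le_induction with
      | base => rw [h1]
      | succ M hM ih =>
        rw [hrec M hM]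
        exact (integral_norm_fejerSum_sub_convolution_le N (hH M hM) (hG _ (by omega))
          (hnorm _ (by omega))).trans ih
    have hcoeff_tendsto (n : ℤ) (hn : n ≠ 0) :
        Tendsto (fun M => ‖fourierCoeff (H M) n‖) atTop (nhds 0) := by
      refine tendsto_zero_iff_norm_tendsto_zero.mp ((h n hn).congr' ?_)
      filter_upwards [eventually_ge_atTop 1] with M hM
      exact (hcoeff n M hM).symm
    rw [Metric.tendsto_atTop]
    intro ε hε
    obtain ⟨N, hN0, hN⟩ := ((eventually_ne_atTop 0).and
      ((tendsto_integral_norm_fejerSum_sub (hG 1 le_rfl)).eventually_lt_const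
        (half_pos hε))).exists
    have hlim : Tendsto (fun M => (N : ℝ)⁻¹ * ∑ j ∈ range N, ∑ k ∈ (range N).erase j,
        ‖fourierCoeff (H M) ((j : ℤ) - k)‖) atTop (nhds 0) := by
      have : Tendsto (fun M => (N : ℝ)⁻¹ * ∑ j ∈ range N, ∑ k ∈ (range N).erase j,
          ‖fourierCoeff (H M) ((j : ℤ) - k)‖) atTop
          (nhds ((N : ℝ)⁻¹ * ∑ j ∈ range N, ∑ k ∈ (range N).erase j, 0)) :=
        (tendsto_finsetSum _ fun j _ => tendsto_finsetSum _ fun k hk =>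
          hcoeff_tendsto _ (by have := ne_of_mem_erase hk; omega)).const_mul _
      simpa using this
    obtain ⟨M₀, hM₀⟩ := eventually_atTop.mp (hlim.eventually_lt_const (half_pos hε))
    refine ⟨max M₀ 1, fun M hM => ?_⟩
    have hM1 : 1 ≤ M := (le_max_right _ _).trans hM
    have hmeanH : fourierCoeff (H M) 0 = 1 := by
      rw [hcoeff 0 M hM1]
      exact prod_eq_one fun m hm => hmean m (mem_Icc.mp hm).1
    have hF := continuous_integrable_haarAddCircle (continuous_fejerSum N (H M))
    have hF1 := (hF.sub (integrable_const (1 : ℂ))).norm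
    rw [Real.dist_0_eq_abs, abs_of_nonneg (integral_nonneg fun _ => norm_nonneg _)]
    calc ∫ x, ‖H M x - 1‖ ∂haarAddCircle
        ≤ ∫ x, (‖fejerSum N (H M) x - H M x‖ + ‖fejerSum N (H M) x - 1‖) ∂haarAddCircle := by
          refine integral_mono ((hH M hM1).sub (integrable_const 1)).norm
            ((integrable_norm_fejerSum_sub N (hH M hM1)).add hF1) fun x => ?_
          simpa only [norm_sub_rev (H M x)] using norm_sub_le_norm_sub_add_norm_sub (H M x) _ 1
      _ = _ := integral_add (integrable_norm_fejerSum_sub N (hH M hM1)) hF1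
      _ < ε / 2 + ε / 2 := add_lt_add ((hfejer N M hM1).trans_lt hN)
          ((integral_norm_fejerSum_sub_one_le hN0 hmeanH).trans_lt
            (hM₀ M ((le_max_left _ _).trans hM)))
      _ = ε := add_halves ε

end Circle

section Lift

open AddCircle
open scoped Convolution

/-- The periodization of the restriction of `f` to `[0, 1)`, as a complex function on the
circle. -/
def circleLift (f : ℝ → ℝ) (x : UnitAddCircle) : ℂ :=
  (liftIco 1 0 f x : ℝ)

theorem circleLift_coe (f : ℝ → ℝ) (y : ℝ) :
    circleLift f (y : UnitAddCircle) = f (Int.fract y) := by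
  have h : (y : UnitAddCircle) = (Int.fract y : ℝ) :=
    (QuotientAddGroup.eq_iff_sub_mem).mpr ⟨⌊y⌋, by simp [Int.self_sub_fract]⟩
  rw [circleLift, h, liftIco_zero_coe_apply ⟨Int.fract_nonneg y, Int.fract_lt_one y⟩]

theorem circleLift_coe_ae (f : ℝ → ℝ) :
    ∀ᵐ y : ℝ, y ∈ Set.uIoc (0 : ℝ) 1 → circleLift f (y : UnitAddCircle) = f y := by
  filter_upwards [compl_mem_ae_iff.mpr (Real.volume_singleton (a := 1))] with y hy1 hy
  rw [Set.uIoc_of_le zero_le_one] at hy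
  rw [circleLift_coe, Int.fract_eq_self.mpr ⟨hy.1.le, lt_of_le_of_ne hy.2 hy1⟩]

theorem integral_comp_circleLift {E : Type*} [NormedAddCommGroup E] [NormedSpace ℝ E]
    (f : ℝ → ℝ) (Φ : UnitAddCircle → ℂ → E) :
    ∫ x, Φ x (circleLift f x) ∂haarAddCircle = ∫ x in (0 : ℝ)..1, Φ x (f x) := by
  rw [integral_haarAddCircle, inv_one, one_smul, ← UnitAddCircle.intervalIntegral_preimage 0,
    zero_add]
  refine intervalIntegral.integral_congr_ae ?_
  filter_upwards [circleLift_coe_ae f] with x hx hx'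
  rw [hx hx']

theorem integrable_circleLift {f : ℝ → ℝ} (hf : IntegrableOn f (Set.Icc 0 1)) :
    Integrable (circleLift f) haarAddCircle := by
  have hvol : (haarAddCircle : Measure UnitAddCircle) = volume := by
    rw [volume_eq_smul_haarAddCircle, ENNReal.ofReal_one, one_smul]
  have hae : IntegrableOn (fun y : ℝ => circleLift f (y : UnitAddCircle)) (Set.Ioc 0 (0 + 1)) := by
    rw [zero_add]
    refine (hf.mono_set Set.Ioc_subset_Icc_self).ofReal.congr ?_
    rw [EventuallyEq, ae_restrict_iff' measurableSet_Ioc]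
    filter_upwards [circleLift_coe_ae f] with y hy hy'
    rw [Set.uIoc_of_le zero_le_one] at hy
    exact (hy hy').symm
  rw [IntegrableOn, ← map_comap_subtype_coe measurableSet_Ioc,
    (MeasurableEmbedding.subtype_coe measurableSet_Ioc).integrable_map_iff] at hae
  rw [hvol]
  have hcomp : circleLift f = (fun y : Set.Ioc (0 : ℝ) (0 + 1) =>
      circleLift f ((y : ℝ) : UnitAddCircle)) ∘ equivIoc 1 0 :=
    funext fun x => congrArg (circleLift f) ((equivIoc 1 0).symm_apply_apply x).symm
  rw [hcomp]
  exact ((measurePreserving_equivIoc 1 (a := 0)).integrable_comp_emb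
    (measurableEquivIoc 1 0).measurableEmbedding).mpr hae

theorem fourierCoeff_circleLift (f : ℝ → ℝ) (n : ℤ) :
    fourierCoeff (circleLift f) n = fourierCoeff01 f n := by
  rw [fourierCoeff, integral_comp_circleLift f fun x z => fourier (-n) x • z, fourierCoeff01]
  refine intervalIntegral.integral_congr fun x _ => ?_
  simp only [fourier_coe_apply, smul_eq_mul]
  rw [mul_comm]
  congr 2
  push_cast
  ring

theorem circleLift_circConv (f g : ℝ → ℝ) :
    circleLift (circConv f g) =
      circleLift f ⋆[ContinuousLinearMap.mul ℂ ℂ, haarAddCircle] circleLift g := by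
  ext x
  induction x using QuotientAddGroup.induction_on with
  | H y =>
    rw [convolution_mul,
      integral_comp_circleLift f fun t z => z * circleLift g ((y : UnitAddCircle) - t)]
    refine (circleLift_coe _ y).trans ?_
    rw [circConv, ← intervalIntegral.integral_ofReal]
    refine intervalIntegral.integral_congr fun t _ => ?_
    have h : Int.fract (Int.fract y - t) = Int.fract (y - t) := by
      rw [← Int.self_sub_floor y, sub_right_comm, Int.fract_sub_intCast]
    rw [← AddCircle.coe_sub, circleLift_coe, h, Complex.ofReal_mul]

end Lift

/-- **Modulo 1 Central Limit Theorem (L¹ version).**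
The circular convolutions `h M = g 1 ∗ ⋯ ∗ g M` of probability densities on `[0,1]`
converge in `L¹([0,1])` to the uniform density `1` as `M → ∞` iff for every
nonzero integer `n` the product of Fourier coefficients `ĝ₁(n)⋯ĝ_M(n)` tends to `0`. -/
theorem modOneCLT_L1 (g : ℕ → ℝ → ℝ) (hg : ∀ m, 1 ≤ m → IsProbDensity (g m))
    (h : ℕ → ℝ → ℝ) (h1 : h 1 = g 1)
    (hrec : ∀ M, 1 ≤ M → h (M + 1) = circConv (h M) (g (M + 1))) :
    Tendsto (fun M => ∫ x in (0:ℝ)..1, |h M x - 1|) atTop (nhds 0) ↔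
      ∀ n : ℤ, n ≠ 0 →
        Tendsto (fun M => ∏ m ∈ Finset.Icc 1 M, fourierCoeff01 (g m) n) atTop (nhds 0) := by
  have hcirc := tendsto_integral_norm_convolution_sub_one_iff (G := fun m => circleLift (g m))
    (H := fun m => circleLift (h m)) (fun m hm => integrable_circleLift (hg m hm).2.1)
    (fun m hm => ?_) (fun m hm => ?_) (by rw [h1])
    (fun M hM => by rw [hrec M hM, circleLift_circConv])
  · simp only [fourierCoeff_circleLift] at hcirc
    rw [← hcirc]
    refine iff_of_eq (congrArg (Tendsto · _ _) (funext fun M => ?_))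
    rw [integral_comp_circleLift (h M) fun _ z => ‖z - 1‖]
    refine intervalIntegral.integral_congr fun x _ => ?_
    rw [← Complex.ofReal_one, ← Complex.ofReal_sub, Complex.norm_real, Real.norm_eq_abs]
  · rw [integral_comp_circleLift (g m) fun _ z => ‖z‖]
    refine (intervalIntegral.integral_congr fun x _ => ?_).trans_le (hg m hm).2.2.le
    rw [Complex.norm_real, Real.norm_of_nonneg ((hg m hm).1 x)]
  · rw [fourierCoeff_circleLift, fourierCoeff01]
    simp [intervalIntegral.integral_ofReal, (hg m hm).2.2]

end
end

section
/- Let g be a probability density on [0,1] and let h_M = g ∗ g ∗ ··· ∗ g (M-fold circular convolution of g with itself), i.e. the density of the sum modulo 1 of M independent identically distributed random variables with common density g. Then h_M converges in L¹([0,1]) to the constant function 1 as M → ∞. -/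
open MeasureTheory Filter

noncomputable section

open AddCircle ContinuousLinearMap
open scoped Convolution

section ConvolutionL1

variable {A : Type*} [AddGroup A] [MeasurableSpace A] [MeasurableAdd₂ A] [MeasurableNeg A]
  {μ : Measure A} [SFinite μ] [μ.IsAddRightInvariant] {f k : A → ℂ}

theorem integral_norm_convolution_le_s9 (hf : Integrable f μ) (hk : Integrable k μ) :
    ∫ x, ‖(f ⋆[mul ℂ ℂ, μ] k) x‖ ∂μ ≤ (∫ x, ‖f x‖ ∂μ) * ∫ x, ‖k x‖ ∂μ := by
  rw [← mul_apply' ℝ ℝ, ← integral_convolution (mul ℝ ℝ) hf.norm hk.norm]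
  refine integral_mono (hf.integrable_convolution (mul ℂ ℂ) hk).norm
    (hf.norm.integrable_convolution (mul ℝ ℝ) hk.norm) fun x => ?_
  simpa [convolution_def] using norm_integral_le_integral_norm (μ := μ) fun t => f t * k (x - t)

/-- Convolution on the right by an integrable function, as a continuous linear map on `L¹`. -/
def convolutionL1 (hk : Integrable k μ) : Lp ℂ 1 μ →L[ℂ] Lp ℂ 1 μ :=
  LinearMap.mkContinuous
    { toFun f := ((L1.integrable_coeFn f).integrable_convolution (mul ℂ ℂ) hk).toL1
      map_add' f g := by
        rw [← Integrable.toL1_add, Integrable.toL1_eq_toL1_iff,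
          convolution_congr _ (Lp.coeFn_add f g) (ae_eq_refl k)]
        filter_upwards [(L1.integrable_coeFn f).ae_convolution_exists (mul ℂ ℂ) hk,
          (L1.integrable_coeFn g).ae_convolution_exists (mul ℂ ℂ) hk] with x hf hg
        exact hf.add_distrib hg
      map_smul' c f := by
        rw [RingHom.id_apply, ← Integrable.toL1_smul, Integrable.toL1_eq_toL1_iff,
          convolution_congr _ (Lp.coeFn_smul c f) (ae_eq_refl k), smul_convolution]
        rfl }
    (∫ x, ‖k x‖ ∂μ) fun f => by
      have hf := L1.integrable_coeFn f
      rw [LinearMap.coe_mk, AddHom.coe_mk, L1.norm_eq_integral_norm, L1.norm_eq_integral_norm,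
        mul_comm]
      refine le_of_eq_of_le (integral_congr_ae ?_) (integral_norm_convolution_le_s9 hf hk)
      filter_upwards [(hf.integrable_convolution (mul ℂ ℂ) hk).coeFn_toL1] with x hx
      rw [hx]

theorem convolutionL1_toL1 (hf : Integrable f μ) (hk : Integrable k μ) :
    convolutionL1 hk hf.toL1 = (hf.integrable_convolution (mul ℂ ℂ) hk).toL1 := by
  refine Eq.trans (b := ((L1.integrable_coeFn _).integrable_convolution (mul ℂ ℂ) hk).toL1) rfl ?_
  rw [Integrable.toL1_eq_toL1_iff, convolution_congr _ hf.coeFn_toL1 (ae_eq_refl k)]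

theorem norm_convolutionL1_le (hk : Integrable k μ) :
    ‖convolutionL1 hk‖ ≤ ∫ x, ‖k x‖ ∂μ :=
  LinearMap.mkContinuous_norm_le _ (integral_nonneg fun _ => norm_nonneg _) _

end ConvolutionL1

section Circle

theorem integral_haarUnitAddCircle {E : Type*} [NormedAddCommGroup E] [NormedSpace ℝ E]
    (f : UnitAddCircle → E) : ∫ z, f z ∂haarAddCircle = ∫ x in (0 : ℝ)..1, f x := by
  rw [integral_haarAddCircle, ← UnitAddCircle.intervalIntegral_preimage 0]
  simp

instance : NullSingletonClass (haarAddCircle : Measure UnitAddCircle) where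
  measure_singleton x := by
    have h := AddCircle.volume_closedBall (T := 1) (x := x) 0
    rwa [Metric.closedBall_zero, volume_eq_smul_haarAddCircle, ENNReal.ofReal_one, one_smul,
      mul_zero, min_eq_right zero_le_one, ENNReal.ofReal_zero] at h

theorem liftIco_coe_eq_fract {B : Type*} (f : ℝ → B) (x : ℝ) :
    liftIco (1 : ℝ) 0 f x = f (Int.fract x) := by
  simp [liftIco, coe_equivIco_mk_apply]

theorem integral_liftIco {E : Type*} [NormedAddCommGroup E] [NormedSpace ℝ E] (f : ℝ → E) :
    ∫ z, liftIco (1 : ℝ) 0 f z ∂haarAddCircle = ∫ x in (0 : ℝ)..1, f x := by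
  rw [integral_haarUnitAddCircle]
  refine intervalIntegral.integral_congr_Ioo_of_le zero_le_one fun x hx => ?_
  rw [liftIco_coe_eq_fract, Int.fract_eq_self.2 (Set.Ioo_subset_Ico_self hx)]

theorem integrable_liftIco {f : ℝ → ℂ} (hf : IntegrableOn f (Set.Icc 0 1)) :
    Integrable (liftIco (1 : ℝ) 0 f) haarAddCircle := by
  have h : MemLp f 1 (volume.restrict (Set.Ioc 0 (0 + 1))) := by
    rw [zero_add, memLp_one_iff_integrable]
    exact hf.mono_set Set.Ioc_subset_Icc_self
  refine (memLp_one_iff_integrable.1 (memLp_haarAddCircle_iff.2 h.memLp_liftIoc)).congr ?_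
  filter_upwards [Measure.ae_ne haarAddCircle ((0 : ℝ) : UnitAddCircle)] with z hz
  exact liftIoc_eq_liftIco_of_ne hz

theorem finite_setOf_fourier_eq {n : ℤ} (hn : n ≠ 0) (c : ℂ) :
    {t : UnitAddCircle | fourier n t = c}.Finite := by
  rcases Set.eq_empty_or_nonempty {t : UnitAddCircle | fourier n t = c} with h | ⟨s, hs⟩
  · rw [h]; exact Set.finite_empty
  have hfin : {u : UnitAddCircle | n.natAbs • u = 0}.Finite :=
    finite_torsion (1 : ℝ) (Int.natAbs_pos.2 hn)
  refine (hfin.image (· + s)).subset fun t ht => ⟨t - s, ?_, sub_add_cancel t s⟩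
  have h : n • t = n • s := by
    refine injective_toCircle one_ne_zero (Circle.ext ?_)
    rw [← fourier_apply, ← fourier_apply]
    exact ht.trans hs.symm
  have h' : n • (t - s) = 0 := by rw [smul_sub, h, sub_self]
  rcases Int.natAbs_eq n with e | e <;> rw [e] at h' <;> simpa using h'

theorem norm_fourierCoeff_lt_one {g : UnitAddCircle → ℝ} (hg : Integrable g haarAddCircle)
    (h0 : ∀ z, 0 ≤ g z) (h1 : ∫ z, g z ∂haarAddCircle = 1) {n : ℤ} (hn : n ≠ 0) :
    ‖fourierCoeff (fun z => (g z : ℂ)) n‖ < 1 := by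
  by_contra! hle
  set a := fourierCoeff (fun z => (g z : ℂ)) n
  have ha0 : 0 < ‖a‖ := one_pos.trans_le hle
  set u : ℂ := starRingEnd ℂ a / ‖a‖ with hu
  have hua : u * a = ‖a‖ := by
    have : (‖a‖ : ℂ) ≠ 0 := by exact_mod_cast ha0.ne'
    rw [hu, div_mul_eq_mul_div, mul_comm, Complex.mul_conj']
    field_simp
  have hunorm : ‖u‖ = 1 := by
    rw [hu, norm_div, RCLike.norm_conj, Complex.norm_real, norm_norm, div_self ha0.ne']
  have hnorm (z : UnitAddCircle) : ‖u * fourier (-n) z‖ = 1 := by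
    rw [norm_mul, hunorm, fourier_apply, Circle.norm_coe, one_mul]
  have hint : Integrable (fun z => u * (fourier (-n) z • (g z : ℂ))) haarAddCircle :=
    (hg.ofReal.fourier_smul (-n)).const_mul u
  have hintre : Integrable (fun z => (u * (fourier (-n) z • (g z : ℂ))).re) haarAddCircle :=
    hint.re
  have hre (z : UnitAddCircle) :
      (u * (fourier (-n) z • (g z : ℂ))).re = (u * fourier (-n) z).re * g z := by
    rw [smul_eq_mul, ← mul_assoc, Complex.re_mul_ofReal]
  have hpos : 0 ≤ fun z => g z - (u * (fourier (-n) z • (g z : ℂ))).re := fun z => by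
    have := (Complex.re_le_norm _).trans (hnorm z).le
    have := mul_le_mul_of_nonneg_right this (h0 z)
    simp only [Pi.zero_apply, hre]
    linarith
  have hzero : ∫ z, (g z - (u * (fourier (-n) z • (g z : ℂ))).re) ∂haarAddCircle = 0 := by
    refine le_antisymm ?_ (integral_nonneg hpos)
    have hswap : ∫ z, (u * (fourier (-n) z • (g z : ℂ))).re ∂haarAddCircle = _ :=
      integral_re hint
    rw [integral_sub hg hintre, h1, hswap, integral_const_mul]
    change 1 - (u * a).re ≤ 0
    rw [hua, Complex.ofReal_re]
    linarith
  have hae := (integral_eq_zero_iff_of_nonneg hpos (hg.sub hintre)).1 hzero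
  have hg0 : g =ᵐ[haarAddCircle] 0 := by
    filter_upwards [hae, (finite_setOf_fourier_eq (neg_ne_zero.2 hn) u⁻¹).countable.ae_notMem
      haarAddCircle] with z hz hz'
    by_contra hgz
    refine hz' ?_
    simp only [Pi.zero_apply, hre] at hz hgz
    have hre1 : (u * fourier (-n) z).re = 1 := by
      refine mul_right_cancel₀ hgz ?_
      linarith
    have hw : u * fourier (-n) z = 1 := by
      have := Complex.norm_of_nonneg' (Complex.re_eq_norm.1 (hre1.trans (hnorm z).symm))
      rw [← this, hnorm, Complex.ofReal_one]
    exact eq_inv_of_mul_eq_one_right hw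
  simp [integral_congr_ae hg0] at h1

theorem convolution_fourier (k : UnitAddCircle → ℂ) (n : ℤ) :
    fourier n ⋆[mul ℂ ℂ, haarAddCircle] k = fourierCoeff k n • ⇑(fourier (T := (1 : ℝ)) n) := by
  ext z
  rw [convolution_mul_swap, Pi.smul_apply, smul_eq_mul, fourierCoeff, ← integral_mul_const]
  congr 1 with t
  simp only [fourier_apply, sub_eq_add_neg, smul_add, smul_neg, neg_smul, toCircle_add,
    Circle.coe_mul, smul_eq_mul]
  ring

theorem convolutionL1_fourierLp {k : UnitAddCircle → ℂ} (hk : Integrable k haarAddCircle)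
    (n : ℤ) : convolutionL1 hk (fourierLp 1 n) = fourierCoeff k n • fourierLp 1 n := by
  have hf : Integrable (fourier n) (haarAddCircle : Measure UnitAddCircle) :=
    (L1.integrable_coeFn (fourierLp 1 n)).congr (coeFn_fourierLp 1 n)
  have e : fourierLp 1 n = hf.toL1 :=
    Lp.ext ((coeFn_fourierLp 1 n).trans hf.coeFn_toL1.symm)
  rw [e, convolutionL1_toL1 hf hk, ← Integrable.toL1_smul _ hf, Integrable.toL1_eq_toL1_iff,
    convolution_fourier]
  rfl

theorem fourierCoeff_one (n : ℤ) :
    fourierCoeff (fun _ : UnitAddCircle => (1 : ℂ)) n = if n = 0 then 1 else 0 := by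
  have h : fourierCoeff (fun _ : UnitAddCircle => (1 : ℂ)) n =
      fourierCoeff (fourierLp (T := (1 : ℝ)) 2 0) n := by
    refine congrFun (fourierCoeff_congr_ae ?_) n
    filter_upwards [coeFn_fourierLp (T := (1 : ℝ)) 2 0] with z hz
    rw [hz, fourier_zero]
  rw [h, ← fourierBasis_repr, ← coe_fourierBasis, HilbertBasis.repr_self, lp.single_apply,
    Pi.single_apply]

theorem tendsto_pow_convolutionL1 {g : UnitAddCircle → ℝ} (hg : Integrable g haarAddCircle)
    (h0 : ∀ z, 0 ≤ g z) (h1 : ∫ z, g z ∂haarAddCircle = 1)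
    (f : Lp ℂ 1 (haarAddCircle : Measure UnitAddCircle)) :
    Tendsto (fun M => (convolutionL1 hg.ofReal ^ M) f) atTop
      (nhds (convolutionL1 (integrable_const (1 : ℂ)) f)) := by
  set T := convolutionL1 (hg.ofReal (𝕜 := ℂ))
  set C := convolutionL1 (integrable_const (1 : ℂ) (μ := (haarAddCircle : Measure UnitAddCircle)))
  have hT : ‖T‖ ≤ 1 := by
    refine (norm_convolutionL1_le _).trans_eq ?_
    simpa [abs_of_nonneg (h0 _)] using h1
  have hlip (M : ℕ) : LipschitzWith 1 (T ^ M) := by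
    simpa using (T.lipschitz.weaken (K' := 1) hT).iterate M
  have hclosed : IsClosed {f | Tendsto (fun M => (T ^ M) f) atTop (nhds (C f))} :=
    (LipschitzWith.uniformEquicontinuous _ 1 hlip).equicontinuous.isClosed_setOfPred_tendsto
      C.continuous
  have hpow (n : ℤ) (M : ℕ) : (T ^ M) (fourierLp 1 n) =
      fourierCoeff (fun z => (g z : ℂ)) n ^ M • fourierLp 1 n := by
    induction M with
    | zero => simp
    | succ M ih =>
      rw [pow_succ, mul_apply_eq_comp, convolutionL1_fourierLp, map_smul, ih, smul_smul, pow_succ']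
      rfl
  have hspan : ∀ f ∈ Submodule.span ℂ (Set.range (fourierLp 1)),
      Tendsto (fun M => (T ^ M) f) atTop (nhds (C f)) := fun f hf => by
    induction hf using Submodule.span_induction with
    | mem f hf =>
      obtain ⟨n, rfl⟩ := hf
      simp_rw [hpow, C, convolutionL1_fourierLp, fourierCoeff_one]
      refine Tendsto.smul_const ?_ _
      rcases eq_or_ne n 0 with rfl | hn
      · have : fourierCoeff (fun z => (g z : ℂ)) 0 = 1 := by
          simp [fourierCoeff, integral_complex_ofReal, h1]
        rw [if_pos rfl, this]
        exact tendsto_const_nhds.congr fun M => (one_pow M).symm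
      · rw [if_neg hn]
        exact tendsto_pow_atTop_nhds_zero_of_norm_lt_one (norm_fourierCoeff_lt_one hg h0 h1 hn)
    | zero => simp
    | add f f' _ _ hf hf' => simpa using hf.add hf'
    | smul a f _ hf => simpa using hf.const_smul a
  have hmem :
      f ∈ (Submodule.span ℂ (Set.range (fourierLp (T := (1 : ℝ)) 1))).topologicalClosure := by
    rw [span_fourierLp_closure_eq_top ENNReal.one_ne_top]
    trivial
  exact closure_minimal (fun f hf => hspan f hf) hclosed hmem

theorem liftIco_circConv {f g : ℝ → ℝ} :
    liftIco (1 : ℝ) 0 (fun x => (circConv f g x : ℂ)) =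
      liftIco (1 : ℝ) 0 (fun x => (f x : ℂ)) ⋆[mul ℂ ℂ, haarAddCircle]
        liftIco (1 : ℝ) 0 (fun x => (g x : ℂ)) := by
  ext z
  obtain ⟨x, hx, rfl⟩ : ∃ x ∈ Set.Ico (0 : ℝ) 1, (x : UnitAddCircle) = z := by
    simpa using (coe_image_Ico_eq (1 : ℝ) 0).ge (Set.mem_univ z)
  rw [liftIco_coe_eq_fract, Int.fract_eq_self.2 hx, convolution_def, integral_haarUnitAddCircle,
    circConv, ← intervalIntegral.integral_ofReal]
  refine intervalIntegral.integral_congr_Ioo_of_le zero_le_one fun y hy => ?_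
  rw [← coe_sub, liftIco_coe_eq_fract, liftIco_coe_eq_fract,
    Int.fract_eq_self.2 (Set.Ioo_subset_Ico_self hy)]
  simp

end Circle

/-- For a probability density `g` on `[0,1]`, the `M`-fold circular self-convolution
`h M = g ∗ g ∗ ⋯ ∗ g` (the density of the sum mod 1 of `M` i.i.d. random variables with
density `g`) converges in `L¹([0,1])` to the constant function `1` as `M → ∞`. -/
theorem modOneCLT_iid (g : ℝ → ℝ) (hg : IsProbDensity g)
    (h : ℕ → ℝ → ℝ) (h1 : h 1 = g)
    (hrec : ∀ M, 1 ≤ M → h (M + 1) = circConv (h M) g) :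
    Tendsto (fun M => ∫ x in (0:ℝ)..1, |h M x - 1|) atTop (nhds 0) := by
  obtain ⟨hg0, hgi, hg1⟩ := hg
  have hF : Integrable (liftIco (1 : ℝ) 0 fun x => (g x : ℂ)) haarAddCircle :=
    integrable_liftIco hgi.ofReal
  have hG : Integrable (liftIco (1 : ℝ) 0 g) haarAddCircle := hF.re
  have hG1 : ∫ z, liftIco (1 : ℝ) 0 g z ∂haarAddCircle = 1 := by rw [integral_liftIco, hg1]
  have key (M : ℕ) :
      ∃ hM : Integrable (liftIco (1 : ℝ) 0 fun x => (h (M + 1) x : ℂ)) haarAddCircle,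
      hM.toL1 = (convolutionL1 (hG.ofReal (𝕜 := ℂ)) ^ M) hF.toL1 := by
    induction M with
    | zero =>
      subst h1
      exact ⟨hF, rfl⟩
    | succ M ih =>
      obtain ⟨hM, e⟩ := ih
      rw [hrec (M + 1) (Nat.le_add_left 1 M), liftIco_circConv]
      refine ⟨hM.integrable_convolution (mul ℂ ℂ) hF, ?_⟩
      rw [pow_succ', mul_apply_eq_comp, ← e, convolutionL1_toL1]
      rfl
  have hlim := tendsto_pow_convolutionL1 hG (fun _ => hg0 _) hG1 hF.toL1
  rw [← tendsto_add_atTop_iff_nat 1]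
  refine (tendsto_iff_norm_sub_tendsto_zero.1 hlim).congr fun M => ?_
  obtain ⟨hM, e⟩ := key M
  have hconst : (liftIco (1 : ℝ) 0 fun x => (g x : ℂ)) ⋆[mul ℂ ℂ, haarAddCircle]
      (fun _ => (1 : ℂ)) = fun _ => (1 : ℂ) := by
    ext z
    simp only [convolution_def, mul_apply', mul_one]
    rw [integral_liftIco, intervalIntegral.integral_ofReal, hg1, Complex.ofReal_one]
  rw [← e, convolutionL1_toL1, ← Integrable.toL1_sub, L1.norm_eq_integral_norm,
    ← integral_liftIco]
  refine integral_congr_ae ?_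
  have hC := hF.integrable_convolution (mul ℂ ℂ) (integrable_const (1 : ℂ))
  filter_upwards [(hM.sub hC).coeFn_toL1] with z hz
  rw [hz, Pi.sub_apply, hconst]
  change ‖((h (M + 1) _ : ℝ) : ℂ) - 1‖ = |h (M + 1) _ - 1|
  rw [← Complex.ofReal_one, ← Complex.ofReal_sub, Complex.norm_real, Real.norm_eq_abs]

end
end
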